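/- Fix integers L ≥ 1 and δ ≥ 1. For each n, let D_n = (D_n(1), …, D_n(n)) ∈ 𝒟_n(L) be an n-tuple of L × L matrices with all entries at most δ, and let ℓ_n = (ℓ_{n,1}, …, ℓ_{n,n}) be nonnegative integers with ℓ_{n,i} ≤ L for all i and Σ_{i=1}^n ℓ_{n,i} even, such that the number of indices i ∈ {1, …, n} for which the total entry sum of D_n(i) differs from ℓ_{n,i} is o(n). Then for every sufficiently large n there exists D̃_n = (D̃_n(1), …, D̃_n(n)) ∈ 𝒟_n(L) such that the total entry sum of D̃_n(i) equals ℓ_{n,i} for every i ∈ {1, …, n}, and the number of indices i with D̃_n(i) ≠ D_n(i) is o(n) as n → ∞. -/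

import Mathlib

open Filter

/-- The set `𝒟_n(L)`: `n`-tuples of `L × L` matrices with nonnegative integer entries
whose sum `S = Σ_i D(i)` is symmetric with even diagonal entries. -/
def memDSeq (n L : ℕ) (D : Fin n → Matrix (Fin L) (Fin L) ℕ) : Prop :=
  (∑ i, D i).IsSymm ∧ ∀ c : Fin L, Even ((∑ i, D i) c c)

/-- The total entry sum of an `L × L` matrix. -/
def totalSum {L : ℕ} (D : Matrix (Fin L) (Fin L) ℕ) : ℕ := ∑ c, ∑ c', D c c'

/-- A natural number below a sum of naturals is a sum of smaller naturals. -/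
theorem exists_sub_sum {I : Type*} (s : Finset I) (a : I → ℕ) :
    ∀ k, k ≤ ∑ i ∈ s, a i → ∃ f : I → ℕ, (∀ i, f i ≤ a i) ∧ ∑ i ∈ s, f i = k := by
  classical
  induction s using Finset.induction_on with
  | empty =>
    intro k hk
    refine ⟨fun _ => 0, fun i => Nat.zero_le _, ?_⟩
    simp at hk ⊢
    omega
  | insert x s hx ih =>
    intro k hk
    rw [Finset.sum_insert hx] at hk
    obtain ⟨f, hf, hs⟩ := ih (k - min k (a x)) (by omega)
    refine ⟨Function.update f x (min k (a x)), ?_, ?_⟩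
    · intro i
      by_cases h : i = x
      · subst h; simp
      · simp [h, hf i]
    · rw [Finset.sum_insert hx, Finset.sum_update_of_notMem hx, hs]
      simp

/-- Moving mass to the entry `e0`. -/
theorem move_mass {I E : Type*} [Fintype I] [Fintype E] [DecidableEq E]
    (A : I → E → ℕ) (e0 : E) (T : E → ℕ) (hT : ∀ e, T e ≤ ∑ i, A i e) :
    ∃ A' : I → E → ℕ, (∀ i, ∑ e, A' i e = ∑ e, A i e) ∧
      (∀ e, e ≠ e0 → ∑ i, A' i e = T e) ∧
      (Finset.univ.filter fun i => A' i ≠ A i).card ≤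
        ∑ e ∈ Finset.univ.erase e0, (∑ i, A i e - T e) := by
  classical
  choose f hf hfs using fun e => exists_sub_sum Finset.univ (fun i => A i e)
    (∑ i, A i e - T e) (Nat.sub_le _ _)
  refine ⟨fun i e => if e = e0 then A i e0 + ∑ e ∈ Finset.univ.erase e0, f e i
    else A i e - f e i, ?_, ?_, ?_⟩
  · intro i
    rw [← Finset.add_sum_erase _ _ (Finset.mem_univ e0),
      ← Finset.add_sum_erase _ (A i) (Finset.mem_univ e0)]
    simp only [if_true]
    rw [add_assoc, ← Finset.sum_add_distrib]
    congr 1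
    refine Finset.sum_congr rfl fun e he => ?_
    rw [if_neg (Finset.ne_of_mem_erase he)]
    have := hf e i
    omega
  · intro e he
    simp only [if_neg he]
    have h1 : ∑ i, (A i e - f e i) + ∑ i, f e i = ∑ i, A i e := by
      rw [← Finset.sum_add_distrib]
      refine Finset.sum_congr rfl fun i _ => ?_
      have := hf e i
      omega
    have h2 := hfs e
    have h3 := hT e
    omega
  · calc _ ≤ ∑ i : I, ∑ e ∈ Finset.univ.erase e0, f e i := by
          rw [Finset.card_filter]
          refine Finset.sum_le_sum fun i _ => ?_
          split_ifs with h
          · by_contra hc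
            apply h
            have h0 : ∑ e ∈ Finset.univ.erase e0, f e i = 0 := by omega
            funext e
            by_cases he : e = e0
            · subst he
              simp [h0]
            · simp only [if_neg he]
              have := (Finset.sum_eq_zero_iff.1 h0) e (by simp [he])
              omega
          · exact Nat.zero_le _
      _ = _ := by
          rw [Finset.sum_comm]
          exact Finset.sum_congr rfl fun e _ => hfs e
      _ ≤ _ := le_rfl

/-- Parity: a symmetric matrix with even total sum and all diagonal entries but one even
has that entry even as well. -/
theorem parity {C : Type*} [Fintype C] [DecidableEq C] (S : C → C → ℕ) (z : C)
    (hs : ∀ c d, S c d = S d c) (hd : ∀ c, c ≠ z → Even (S c c))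
    (ht : Even (∑ e : C × C, S e.1 e.2)) : Even (S z z) := by
  rw [← Finset.add_sum_erase _ _ (Finset.mem_univ (z, z))] at ht
  refine (Nat.even_add.1 ht).2 ?_
  rw [← ZMod.natCast_eq_zero_iff_even, Nat.cast_sum]
  refine Finset.sum_involution (fun a _ => a.swap) ?_ ?_ ?_ ?_
  · rintro ⟨a, b⟩ _
    simp only [Prod.swap, hs b a]
    exact CharTwo.add_self_eq_zero _
  · rintro ⟨a, b⟩ hab h0 h
    simp only [Prod.swap, Prod.mk.injEq] at h
    obtain ⟨rfl, -⟩ := h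
    apply h0
    rw [ZMod.natCast_eq_zero_iff_even]
    apply hd
    rintro rfl
    simp at hab
  · rintro ⟨a, b⟩ hab
    simp only [Finset.mem_erase, Finset.mem_univ, and_true, Prod.swap, ne_eq,
      Prod.mk.injEq] at hab ⊢
    tauto
  · rintro ⟨a, b⟩ _
    rfl

/-- The quantitative version for fixed `n`. -/
theorem fixed_n (n L δ : ℕ) (hL : 1 ≤ L) (D : Fin n → Matrix (Fin L) (Fin L) ℕ)
    (ℓ : Fin n → ℕ) (hD : memDSeq n L D) (hDδ : ∀ i c c', D i c c' ≤ δ)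
    (he : Even (∑ i, ℓ i)) :
    ∃ Dt : Fin n → Matrix (Fin L) (Fin L) ℕ,
      (memDSeq n L Dt ∧ ∀ i, totalSum (Dt i) = ℓ i) ∧
      (Finset.univ.filter fun i => Dt i ≠ D i).card ≤
        (Finset.univ.filter fun i => totalSum (D i) ≠ ℓ i).card +
        L * L * (δ * (Finset.univ.filter fun i => totalSum (D i) ≠ ℓ i).card + 1) := by
  classical
  set B := Finset.univ.filter fun i => totalSum (D i) ≠ ℓ i with hB
  let z : Fin L := ⟨0, hL⟩
  let A : Fin n → Fin L × Fin L → ℕ := fun i e =>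
    if totalSum (D i) ≠ ℓ i then (if e = (z, z) then ℓ i else 0) else D i e.1 e.2
  have hAs : ∀ i, ∑ e, A i e = ℓ i := by
    intro i
    by_cases h : totalSum (D i) ≠ ℓ i
    · simp [A, h]
    · simp only [A, h, if_false]
      rw [Fintype.sum_prod_type]
      exact not_not.1 h
  let S : Fin L → Fin L → ℕ := fun c d => ∑ i, A i (c, d)
  let S0 : Fin L → Fin L → ℕ := fun c d => ∑ i, D i c d
  have hS0 : ∀ c d, S0 c d = S0 d c := by
    intro c d
    have := hD.1.apply d c
    simpa [Matrix.sum_apply] using this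
  have hle : ∀ c d, (c, d) ≠ (z, z) → S c d ≤ S0 c d := by
    intro c d h
    refine Finset.sum_le_sum fun i _ => ?_
    simp only [A, if_neg h]
    split_ifs <;> simp
  have hge : ∀ c d, S0 c d ≤ S c d + δ * B.card := by
    intro c d
    have : δ * B.card = ∑ i : Fin n, if totalSum (D i) ≠ ℓ i then δ else 0 := by
      rw [← Finset.sum_filter, Finset.sum_const, smul_eq_mul, mul_comm]
    rw [this]
    simp only [S, S0]
    rw [← Finset.sum_add_distrib]
    refine Finset.sum_le_sum fun i _ => ?_
    have := hDδ i c d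
    simp only [A]
    split_ifs <;> first | omega | exact this | exact le_add_left this
  let T : Fin L × Fin L → ℕ := fun e =>
    if e.1 = e.2 then 2 * (S e.1 e.2 / 2) else min (S e.1 e.2) (S e.2 e.1)
  obtain ⟨A', h1, h2, h3⟩ := move_mass A (z, z) T (by
    rintro ⟨c, d⟩
    change T (c, d) ≤ S c d
    simp only [T]
    split_ifs
    · omega
    · exact min_le_left _ _)
  have hdef : ∑ e ∈ Finset.univ.erase (z, z), (∑ i, A i e - T e) ≤
      L * L * (δ * B.card + 1) := by
    refine (Finset.sum_le_card_nsmul _ _ (δ * B.card + 1) ?_).trans ?_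
    · rintro ⟨c, d⟩ hcd
      have hne := Finset.ne_of_mem_erase hcd
      change S c d - T (c, d) ≤ _
      simp only [T]
      split_ifs with h
      · omega
      · have a1 := hle c d hne
        have a2 := hge d c
        have a3 := hS0 c d
        omega
    · rw [smul_eq_mul]
      gcongr
      refine (Finset.card_le_univ _).trans ?_
      simp
  have hsymm : ∀ c d, ∑ i, A' i (c, d) = ∑ i, A' i (d, c) := by
    intro c d
    by_cases h : c = d
    · rw [h]
    · rw [h2 (c, d) (by rintro ⟨⟩; exact h rfl), h2 (d, c) (by rintro ⟨⟩; exact h rfl)]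
      simp only [T, if_neg h, if_neg (Ne.symm h)]
      exact min_comm _ _
  have hdiag : ∀ c, c ≠ z → Even (∑ i, A' i (c, c)) := by
    intro c h
    rw [h2 (c, c) (by intro h'; exact h (Prod.mk.inj h').1)]
    simp [T]
  have hz : Even (∑ i, A' i (z, z)) := by
    refine parity (fun c d => ∑ i, A' i (c, d)) z hsymm hdiag ?_
    rw [Finset.sum_comm]
    simp only [Prod.mk.eta]
    simp only [h1, hAs]
    exact he
  refine ⟨fun i => Matrix.of fun c d => A' i (c, d), ⟨⟨?_, ?_⟩, ?_⟩, ?_⟩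
  · ext c d
    simpa [Matrix.sum_apply] using hsymm d c
  · intro c
    simp only [Matrix.sum_apply, Matrix.of_apply]
    by_cases h : c = z
    · rw [h]; exact hz
    · exact hdiag c h
  · intro i
    rw [← hAs i, ← h1 i, Fintype.sum_prod_type]
    rfl
  · refine le_trans ?_ (Nat.add_le_add_left (h3.trans hdef) _)
    refine le_trans (Finset.card_le_card ?_) (Finset.card_union_le _ _)
    intro i hi
    simp only [hB, Finset.mem_union, Finset.mem_filter, Finset.mem_univ, true_and] at hi ⊢
    by_contra hc
    push Not at hc
    obtain ⟨c1, c2⟩ := hc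
    apply hi
    ext c d
    simp [c2, A, c1]

/-- **Modification of colored degree sequences.**
Given `D_n ∈ 𝒟_n(L)` with entries at most `δ` and target degrees `ℓ_n` bounded by `L`
with even total sum agreeing with the total entry sums of the `D_n(i)` in all but
`o(n)` indices, one can find, for all `n` large enough, `D̃_n ∈ 𝒟_n(L)` whose `i`-th
total entry sum equals `ℓ_{n,i}` for every `i`, with `D̃_n(i) ≠ D_n(i)` for only `o(n)`
indices `i`. -/
theorem colored_degree_sequence_modification (L δ : ℕ) (hL : 1 ≤ L) (hδ : 1 ≤ δ)
    (D : (n : ℕ) → Fin n → Matrix (Fin L) (Fin L) ℕ)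
    (ℓ : (n : ℕ) → Fin n → ℕ)
    (hD : ∀ n, memDSeq n L (D n))
    (hDδ : ∀ n i c c', D n i c c' ≤ δ)
    (hℓL : ∀ n i, ℓ n i ≤ L)
    (hℓeven : ∀ n, Even (∑ i, ℓ n i))
    (hs : Tendsto
      (fun n => ((Finset.univ.filter fun i : Fin n => totalSum (D n i) ≠ ℓ n i).card : ℝ) / n)
      atTop (nhds 0)) :
    ∃ Dt : (n : ℕ) → Fin n → Matrix (Fin L) (Fin L) ℕ,
      (∀ᶠ n in atTop, memDSeq n L (Dt n) ∧ ∀ i, totalSum (Dt n i) = ℓ n i) ∧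
      Tendsto
        (fun n => ((Finset.univ.filter fun i : Fin n => Dt n i ≠ D n i).card : ℝ) / n)
        atTop (nhds 0) := by
  choose Dt hDt hc using fun n => fixed_n n L δ hL (D n) (ℓ n) (hD n) (hDδ n) (hℓeven n)
  refine ⟨Dt, Eventually.of_forall hDt, ?_⟩
  have hlim := (hs.mul_const (1 + (L : ℝ) * L * δ)).add
    (tendsto_const_div_atTop_nhds_zero_nat ((L : ℝ) * L))
  rw [zero_mul, zero_add] at hlim
  refine squeeze_zero (fun n => by positivity) (fun n => ?_) hlim
  have h := hc n
  rw [div_mul_eq_mul_div, ← add_div]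
  gcongr
  have h' : ((Finset.univ.filter fun i : Fin n => Dt n i ≠ D n i).card : ℝ) ≤ _ :=
    Nat.cast_le.2 h
  refine h'.trans (le_of_eq ?_)
  push_cast
  ring
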